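/- arXiv:1906.06860 — 2 statements merged into one kernel-verified Lean document; each statement's English description precedes it below -/
import Mathlib

section
/- The series $D$ is invariant under the substitution $\epsilon\mapsto-\epsilon$; that is, $D$ contains only even powers of $\epsilon$ (the coefficient of $\epsilon^{2g+1}$ in $D$ vanishes for every $g\ge0$). -/
open PowerSeries

variable (A : Type*) [CommRing A] [Algebra ℚ A]

/-- The image `u_c ∈ A[[x,ε]]` of `u ∈ A[[x]]` under the continuous `A`-algebra map
sending `x ↦ x + cε`, described coefficientwise: the coefficient of `x^i ε^j` in `u_c`
is `C(i+j, j) c^j` times the coefficient of `x^{i+j}` in `u`. -/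
noncomputable def usub (c : ℚ) (u : PowerSeries A) : MvPowerSeries (Fin 2) A :=
  fun d => algebraMap ℚ A ((Nat.choose (d 0 + d 1) (d 1) : ℚ) * c ^ (d 1)) *
    PowerSeries.coeff (R := A) (d 0 + d 1) u

/-- The formal exponential of a multivariate power series with zero constant term,
`fexpA V = ∑_{n≥0} V^n / n!`, defined coefficientwise. -/
noncomputable def fexpA (V : MvPowerSeries (Fin 2) A) : MvPowerSeries (Fin 2) A :=
  fun d => ∑ n ∈ Finset.range (d 0 + d 1 + 1),
    MvPowerSeries.coeff (R := A) d ((Nat.factorial n : ℚ)⁻¹ • V ^ n)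

/-- The series `D = ∑_{0 ≤ α_1 ≤ ⋯ ≤ α_m ≤ n} exp(∑_{j=1}^m (u_{c_j} - u))` with
`c_j = α_j m - (j - 1/2) n`, the sum ranging over monotone tuples
`0 ≤ α_1 ≤ ⋯ ≤ α_m ≤ n`.  In operator language,
`e^{mu}·D = Λ^{-n/2} res (Λ^m + e^u Λ^{-n})^{m+n}`. -/
noncomputable def Dser (m n : ℕ) (u : PowerSeries A) : MvPowerSeries (Fin 2) A :=
  ∑ α ∈ Finset.univ.filter
      (fun α : Fin m → Fin (n + 1) => ∀ i j : Fin m, i ≤ j → α i ≤ α j),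
    fexpA A (∑ j : Fin m,
      (usub A ((α j : ℚ) * m - (((j : ℕ) : ℚ) + 1 / 2) * n) u - usub A 0 u))

/-!
Complementing a partition inside the `m × n` box, `α_j ↦ n - α_{m+1-j}`, permutes the index set of
`D`. It sends each shift `c_j` to `-c_{m+1-j}`, which has the same effect on the exponents as
`ε ↦ -ε`. Hence `D` is fixed by `ε ↦ -ε`, and its odd coefficients vanish since `2` is invertible.
-/

section

variable {R : Type*} [CommRing R] [Algebra ℚ R]

/-- The substitution `ε ↦ tε` on `R[[x,ε]]`, where `x` and `ε` are the variables of index `0`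
and `1`. -/
noncomputable def scaleEps (t : ℚ) : MvPowerSeries (Fin 2) R →+* MvPowerSeries (Fin 2) R :=
  MvPowerSeries.rescale ![1, algebraMap ℚ R t]

theorem coeff_scaleEps (t : ℚ) (V : MvPowerSeries (Fin 2) R) (d : Fin 2 →₀ ℕ) :
    MvPowerSeries.coeff d (scaleEps t V) = t ^ d 1 • MvPowerSeries.coeff d V := by
  rw [scaleEps, MvPowerSeries.coeff_rescale, Finsupp.prod_fintype _ _ fun _ => pow_zero _]
  simp [Algebra.smul_def]

theorem coeff_eq_zero_of_scaleEps_neg_one_eq_self {V : MvPowerSeries (Fin 2) R}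
    (hV : scaleEps (-1) V = V) {d : Fin 2 →₀ ℕ} (hd : Odd (d 1)) :
    MvPowerSeries.coeff d V = 0 := by
  have : IsAddTorsionFree R := .of_module_rat R
  have hneg : MvPowerSeries.coeff d V = -MvPowerSeries.coeff d V := by
    simpa only [hV, hd.neg_one_pow, neg_one_smul] using coeff_scaleEps (-1) V d
  exact self_eq_neg.mp hneg

theorem coeff_usub (c : ℚ) (u : PowerSeries R) (d : Fin 2 →₀ ℕ) :
    MvPowerSeries.coeff d (usub R c u) =
      algebraMap ℚ R ((d 0 + d 1).choose (d 1) * c ^ d 1) * PowerSeries.coeff (d 0 + d 1) u :=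
  rfl

theorem scaleEps_usub (t c : ℚ) (u : PowerSeries R) :
    scaleEps t (usub R c u) = usub R (t * c) u := by
  ext d
  rw [coeff_scaleEps, coeff_usub, coeff_usub, Algebra.smul_def, ← mul_assoc, ← map_mul]
  ring_nf

theorem coeff_fexpA (V : MvPowerSeries (Fin 2) R) (d : Fin 2 →₀ ℕ) :
    MvPowerSeries.coeff d (fexpA R V) =
      ∑ k ∈ Finset.range (d 0 + d 1 + 1),
        (k.factorial : ℚ)⁻¹ • MvPowerSeries.coeff d (V ^ k) :=
  rfl

theorem rescale_fexpA (a : Fin 2 → R) (V : MvPowerSeries (Fin 2) R) :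
    MvPowerSeries.rescale a (fexpA R V) = fexpA R (MvPowerSeries.rescale a V) := by
  ext d
  simp only [MvPowerSeries.coeff_rescale, coeff_fexpA, ← map_pow, Finset.mul_sum, mul_smul_comm]

/-- The complement `j ↦ k - 1 - α (m - 1 - j)` of a tuple `α` in a box. On monotone tuples, viewed
as partitions in the box, this is the usual complementary partition. -/
def boxComplement (m k : ℕ) : Equiv.Perm (Fin m → Fin k) :=
  Equiv.arrowCongr Fin.revPerm Fin.revPerm

theorem boxComplement_apply {m k : ℕ} (α : Fin m → Fin k) (j : Fin m) :
    boxComplement m k α j = (α j.rev).rev :=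
  rfl

theorem monotone_boxComplement_iff {m k : ℕ} {α : Fin m → Fin k} :
    Monotone (boxComplement m k α) ↔ Monotone α := by
  refine ⟨fun h i j hij => ?_, fun h i j hij => ?_⟩
  · simpa [boxComplement_apply] using h (Fin.rev_le_rev.mpr hij)
  · exact Fin.rev_le_rev.mpr (h (Fin.rev_le_rev.mpr hij))

/-- The shift `c_j = α_j m - (j - 1/2) n`. Indices start at `0` here, so `j - 1/2` becomes
`j + 1/2`. -/
def shift {m n : ℕ} (α : Fin m → Fin (n + 1)) (j : Fin m) : ℚ :=
  (α j : ℚ) * m - (((j : ℕ) : ℚ) + 1 / 2) * n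

theorem shift_boxComplement {m n : ℕ} (α : Fin m → Fin (n + 1)) (j : Fin m) :
    shift (boxComplement m (n + 1) α) j = -shift α j.rev := by
  have hrev {k : ℕ} (i : Fin k) : ((i.rev : ℕ) : ℚ) = k - 1 - (i : ℕ) := by
    rw [Fin.val_rev, Nat.cast_sub i.isLt]
    push_cast
    ring
  simp only [shift, boxComplement_apply, hrev]
  push_cast
  ring

/-- The exponent `∑ j, (u_{c_j} - u)` of the term of `D` indexed by `α`. -/
noncomputable def shiftExponent {m n : ℕ} (u : PowerSeries R) (α : Fin m → Fin (n + 1)) :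
    MvPowerSeries (Fin 2) R :=
  ∑ j, (usub R (shift α j) u - usub R 0 u)

theorem Dser_eq_sum_fexpA_shiftExponent (m n : ℕ) (u : PowerSeries R) :
    Dser R m n u =
      ∑ α ∈ {α : Fin m → Fin (n + 1) | ∀ i j, i ≤ j → α i ≤ α j}, fexpA R (shiftExponent u α) :=
  rfl

theorem scaleEps_neg_one_shiftExponent {m n : ℕ} (u : PowerSeries R) (α : Fin m → Fin (n + 1)) :
    scaleEps (-1) (shiftExponent u α) = shiftExponent u (boxComplement m (n + 1) α) := by
  simp only [shiftExponent, map_sum, map_sub, scaleEps_usub, neg_one_mul, neg_zero,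
    shift_boxComplement]
  exact (Equiv.sum_comp Fin.revPerm fun j => usub R (-shift α j) u - usub R 0 u).symm

theorem scaleEps_neg_one_Dser (m n : ℕ) (u : PowerSeries R) :
    scaleEps (-1) (Dser R m n u) = Dser R m n u := by
  rw [Dser_eq_sum_fexpA_shiftExponent, map_sum]
  refine Finset.sum_equiv (boxComplement m (n + 1)) (fun α => ?_) fun α _ => ?_
  · rw [Finset.mem_filter_univ, Finset.mem_filter_univ]
    exact monotone_boxComplement_iff.symm
  · rw [← scaleEps_neg_one_shiftExponent]
    exact rescale_fexpA _ _

end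

theorem Dser_even_in_epsilon_general (m n : ℕ) (u : PowerSeries A) (i j : ℕ) (hj : Odd j) :
    MvPowerSeries.coeff (Finsupp.single 0 i + Finsupp.single 1 j) (Dser A m n u) = 0 :=
  coeff_eq_zero_of_scaleEps_neg_one_eq_self (scaleEps_neg_one_Dser m n u) (by simpa using hj)

/-- The series `D` is invariant under `ε ↦ -ε`: the coefficient of `x^i ε^j` in `D`
vanishes for every odd `j`. -/
theorem Dser_even_in_epsilon (m n : ℕ) (hm : 0 < m) (hn : 0 < n)
    (hmn : Nat.Coprime m n) (u : PowerSeries A) :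
    ∀ i j : ℕ, Odd j →
      MvPowerSeries.coeff (R := A) (Finsupp.single 0 i + Finsupp.single 1 j) (Dser A m n u) = 0 :=
  Dser_even_in_epsilon_general A m n u
end

section
/- The first two gap coefficients are given explicitly by $P_1(m,n)=\frac{(m-1)\,n\,h}{24\,m}$ and $P_2(m,n)=-\frac{4m^2n^2h^2+mnh\,(3m^2-7mn-7n^2)-nh\,(4m^2-3mn-3n^2)+mnh}{960\,m}$. -/
open MvPowerSeries

/-- The formal exponential of a multivariate power series (with zero constant term),
`fexp V = ∑_{n≥0} V^n / n!`, defined coefficientwise. -/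
noncomputable def fexp (V : MvPowerSeries (Fin 2) ℚ) : MvPowerSeries (Fin 2) ℚ :=
  fun d => ∑ n ∈ Finset.range (d 0 + d 1 + 1),
    (Nat.factorial n : ℚ)⁻¹ * MvPowerSeries.coeff d (V ^ n)

/-- The shift `S_c : x ↦ x + cε`, i.e. the continuous `ℚ`-algebra endomorphism of
`ℚ[[X,E]]` with `S_c(X) = X + c·E` and `S_c(E) = E`, described coefficientwise. -/
noncomputable def shiftS (c : ℚ) (V : MvPowerSeries (Fin 2) ℚ) : MvPowerSeries (Fin 2) ℚ :=
  fun d => ∑ t ∈ Finset.range (d 1 + 1),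
    (Nat.choose (d 0 + t) t : ℚ) * c ^ t *
      MvPowerSeries.coeff (Finsupp.single 0 (d 0 + t) + Finsupp.single 1 (d 1 - t)) V

/-- The difference equation
`∑_{0 ≤ α_1 ≤ ⋯ ≤ α_m ≤ n} exp(∑_{j=1}^m S_{α_j m - (j-1/2) n}(V)) = C(m+n,m)·(1+X)`. -/
def diffEq (m n : ℕ) (V : MvPowerSeries (Fin 2) ℚ) : Prop :=
  ∑ α ∈ Finset.univ.filter
      (fun α : Fin m → Fin (n + 1) => ∀ i j : Fin m, i ≤ j → α i ≤ α j),
    fexp (∑ j : Fin m, shiftS ((α j : ℚ) * m - (((j : ℕ) : ℚ) + 1 / 2) * n) V)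
  = (Nat.choose (m + n) m : MvPowerSeries (Fin 2) ℚ) * (1 + MvPowerSeries.X 0)

open scoped BigOperators

/-!
The Euler operator `(1 + X) ∂/∂X + E ∂/∂E` commutes with all shifts and fixes `1 + X`. Applied to
the difference equation, it shows that `G = euler V - 1 / m` satisfies a linear equation
`∑ shiftS (c i) G * F i = 0` in which the constant terms of the `F i` have a nonzero sum, and so
`G = 0`. Hence `V - log (1 + X) / m` is homogeneous of degree zero in `1 + X` and `E`, and it
remains to find the coefficients of `E, …, E ^ 4` of `V` at `X = 0`.

There the equation says that averages over the sequences `0 ≤ α₁ ≤ ⋯ ≤ α_m ≤ n` of polynomials in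
the power sums of the shifts `α_j m - (j - 1/2) n` vanish. For sequences of any length `j` with any
bound `a`, the mean of such a polynomial is a polynomial in `j` and `a`, verified by Pascal's
recursion on whether the last term equals `a`. All means of odd degree are multiples of `a m - j n`,
so they vanish for `j = m`, `a = n`, and with them the coefficients of `E` and `E ^ 3`.
-/

section FormalExponential

/-- The coefficient of `X ^ i E ^ k`. -/
noncomputable abbrev coeffXE (i k : ℕ) : MvPowerSeries (Fin 2) ℚ →ₗ[ℚ] ℚ :=
  coeff (Finsupp.single 0 i + Finsupp.single 1 k)

lemma single_add_single_eq (d : Fin 2 →₀ ℕ) :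
    Finsupp.single 0 (d 0) + Finsupp.single 1 (d 1) = d := by
  ext i
  fin_cases i <;> simp

lemma ext_coeffXE {U V : MvPowerSeries (Fin 2) ℚ}
    (h : ∀ i k, coeffXE i k U = coeffXE i k V) : U = V := by
  ext d
  rw [← single_add_single_eq d]
  exact h _ _

lemma coeffXE_C (i k : ℕ) (q : ℚ) : coeffXE i k (C q) = if i = 0 ∧ k = 0 then q else 0 := by
  simp [coeffXE, coeff_C, Finsupp.ext_iff]

lemma coeffXE_pderiv_zero (i k : ℕ) (V : MvPowerSeries (Fin 2) ℚ) :
    coeffXE i k (pderiv ℚ 0 V) = (i + 1) * coeffXE (i + 1) k V := by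
  rw [coeffXE, coeffXE, coeff_pderiv, add_right_comm, ← Finsupp.single_add, mul_comm]
  simp only [Finsupp.add_apply, Finsupp.single_eq_same, ne_eq, not_false_eq_true,
    Finsupp.single_eq_of_ne, add_zero, zero_ne_one]

lemma coeffXE_pderiv_one (i k : ℕ) (V : MvPowerSeries (Fin 2) ℚ) :
    coeffXE i k (pderiv ℚ 1 V) = (k + 1) * coeffXE i (k + 1) V := by
  simp [coeffXE, coeff_pderiv, add_assoc, mul_comm]

/-- The exponential series of `W` cut off before degree `N`. -/
noncomputable def expTrunc (N : ℕ) (W : MvPowerSeries (Fin 2) ℚ) : MvPowerSeries (Fin 2) ℚ :=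
  ∑ n ∈ Finset.range N, (n.factorial : ℚ)⁻¹ • W ^ n

lemma pderiv_expTrunc_succ (i : Fin 2) (N : ℕ) (W : MvPowerSeries (Fin 2) ℚ) :
    pderiv ℚ i (expTrunc (N + 1) W) = pderiv ℚ i W * expTrunc N W := by
  have pderiv_term (n : ℕ) : pderiv ℚ i (((n + 1).factorial : ℚ)⁻¹ • W ^ (n + 1))
      = pderiv ℚ i W * ((n.factorial : ℚ)⁻¹ • W ^ n) := by
    have cancel : ((n + 1).factorial : ℚ)⁻¹ * (n + 1 : ℕ) = (n.factorial : ℚ)⁻¹ := by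
      rw [Nat.factorial_succ]
      push_cast
      field_simp
    rw [Derivation.map_smul, pderiv_pow, Nat.add_sub_cancel, ← cancel, mul_smul,
      Nat.cast_smul_eq_nsmul, nsmul_eq_mul, mul_smul_comm]
    ring_nf
  simp only [expTrunc, Finset.sum_range_succ', map_add, map_sum, pderiv_term, Finset.mul_sum]
  simp

lemma coeff_fexp_eq_coeff_expTrunc {W : MvPowerSeries (Fin 2) ℚ} (hW : constantCoeff W = 0)
    {d : Fin 2 →₀ ℕ} {N : ℕ} (hN : d.degree < N) : coeff d (fexp W) = coeff d (expTrunc N W) := by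
  have degree_eq : d.degree = d 0 + d 1 := by simp [Finsupp.degree_eq_sum]
  rw [degree_eq] at hN
  simp only [expTrunc, map_sum, coeff_smul]
  refine Finset.sum_subset (Finset.range_mono hN) fun n _ hn => ?_
  rw [coeff_of_lt_order, mul_zero]
  refine lt_of_lt_of_le ?_ (le_order_pow_of_constantCoeff_eq_zero n hW)
  rw [Finset.mem_range, not_lt] at hn
  exact_mod_cast degree_eq ▸ hn

lemma pderiv_fexp (i : Fin 2) {W : MvPowerSeries (Fin 2) ℚ} (hW : constantCoeff W = 0) :
    pderiv ℚ i (fexp W) = pderiv ℚ i W * fexp W := by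
  ext d
  have truncate : coeff d (pderiv ℚ i (fexp W))
      = coeff d (pderiv ℚ i (expTrunc (d.degree + 1 + 1) W)) := by
    have degree_lt : (d + Finsupp.single i 1).degree < d.degree + 1 + 1 := by simp
    rw [coeff_pderiv, coeff_pderiv, coeff_fexp_eq_coeff_expTrunc hW degree_lt]
  rw [truncate, pderiv_expTrunc_succ, coeff_mul, coeff_mul]
  refine Finset.sum_congr rfl fun p hp => ?_
  rw [Finset.HasAntidiagonal.mem_antidiagonal] at hp
  have degree_lt : p.2.degree < d.degree + 1 := by
    rw [← hp, map_add]
    lia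
  rw [coeff_fexp_eq_coeff_expTrunc hW degree_lt]

@[simp]
lemma constantCoeff_fexp (W : MvPowerSeries (Fin 2) ℚ) : constantCoeff (fexp W) = 1 := by
  rw [← coeff_zero_eq_constantCoeff_apply]
  change ∑ n ∈ Finset.range 1, _ = _
  simp

lemma coeffXE_zero_mul (k : ℕ) (U V : MvPowerSeries (Fin 2) ℚ) :
    coeffXE 0 k (U * V)
      = ∑ p ∈ Finset.HasAntidiagonal.antidiagonal k, coeffXE 0 p.1 U * coeffXE 0 p.2 V := by
  simp [coeffXE, coeff_mul, Finsupp.antidiagonal_single]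

lemma coeffXE_zero_succ_fexp (k : ℕ) {W : MvPowerSeries (Fin 2) ℚ} (hW : constantCoeff W = 0) :
    (k + 1) * coeffXE 0 (k + 1) (fexp W)
      = ∑ t ∈ Finset.range (k + 1),
          (t + 1) * coeffXE 0 (t + 1) W * coeffXE 0 (k - t) (fexp W) := by
  rw [← coeffXE_pderiv_one, pderiv_fexp 1 hW, coeffXE_zero_mul,
    Finset.Nat.sum_antidiagonal_eq_sum_range_succ_mk]
  simp only [coeffXE_pderiv_one]

variable {W : MvPowerSeries (Fin 2) ℚ}

lemma coeffXE_zero_zero_fexp (W : MvPowerSeries (Fin 2) ℚ) : coeffXE 0 0 (fexp W) = 1 := by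
  simp [coeffXE]

lemma coeffXE_zero_one_fexp (hW : constantCoeff W = 0) :
    coeffXE 0 1 (fexp W) = coeffXE 0 1 W := by
  have := coeffXE_zero_succ_fexp 0 hW
  simpa [coeffXE_zero_zero_fexp] using this

lemma coeffXE_zero_two_fexp (hW : constantCoeff W = 0) :
    coeffXE 0 2 (fexp W) = coeffXE 0 2 W + coeffXE 0 1 W ^ 2 / 2 := by
  have := coeffXE_zero_succ_fexp 1 hW
  simp only [Finset.sum_range_succ, Finset.sum_range_zero, Nat.reduceAdd, Nat.reduceSub,
    coeffXE_zero_zero_fexp, coeffXE_zero_one_fexp hW] at this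
  linear_combination this / 2

lemma coeffXE_zero_three_fexp (hW : constantCoeff W = 0) :
    coeffXE 0 3 (fexp W)
      = coeffXE 0 3 W + coeffXE 0 1 W * coeffXE 0 2 W + coeffXE 0 1 W ^ 3 / 6 := by
  have := coeffXE_zero_succ_fexp 2 hW
  simp only [Finset.sum_range_succ, Finset.sum_range_zero, Nat.reduceAdd, Nat.reduceSub,
    coeffXE_zero_zero_fexp, coeffXE_zero_one_fexp hW, coeffXE_zero_two_fexp hW] at this
  linear_combination this / 3

lemma coeffXE_zero_four_fexp (hW : constantCoeff W = 0) :
    coeffXE 0 4 (fexp W)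
      = coeffXE 0 4 W + coeffXE 0 1 W * coeffXE 0 3 W + coeffXE 0 2 W ^ 2 / 2
        + coeffXE 0 1 W ^ 2 * coeffXE 0 2 W / 2 + coeffXE 0 1 W ^ 4 / 24 := by
  have := coeffXE_zero_succ_fexp 3 hW
  simp only [Finset.sum_range_succ, Finset.sum_range_zero, Nat.reduceAdd, Nat.reduceSub,
    coeffXE_zero_zero_fexp, coeffXE_zero_one_fexp hW, coeffXE_zero_two_fexp hW,
    coeffXE_zero_three_fexp hW] at this
  linear_combination this / 4

end FormalExponential

section Shift

lemma coeffXE_shiftS (i k : ℕ) (c : ℚ) (V : MvPowerSeries (Fin 2) ℚ) :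
    coeffXE i k (shiftS c V)
      = ∑ t ∈ Finset.range (k + 1), (i + t).choose t * c ^ t * coeffXE (i + t) (k - t) V := by
  simp [coeffXE, shiftS, coeff_apply]

lemma shiftS_add (c : ℚ) (U V : MvPowerSeries (Fin 2) ℚ) :
    shiftS c (U + V) = shiftS c U + shiftS c V :=
  ext_coeffXE fun i k => by simp only [coeffXE_shiftS, map_add, mul_add, Finset.sum_add_distrib]

lemma shiftS_C (c q : ℚ) : shiftS c (C q) = C q :=
  ext_coeffXE fun i k => by
    rw [coeffXE_shiftS, Finset.sum_range_succ', Finset.sum_eq_zero]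
    · simp
    · simp [coeffXE_C]

lemma constantCoeff_shiftS (c : ℚ) (V : MvPowerSeries (Fin 2) ℚ) :
    constantCoeff (shiftS c V) = constantCoeff V := by
  have := coeffXE_shiftS 0 0 c V
  simpa [coeffXE] using this

end Shift

section Euler

/-- The Euler operator `(1 + X) ∂/∂X + E ∂/∂E` of the degree in which `x = 1 + X` and `E` are
both homogeneous of degree one. -/
noncomputable def euler : Derivation ℚ (MvPowerSeries (Fin 2) ℚ) (MvPowerSeries (Fin 2) ℚ) :=
  (1 + X 0 : MvPowerSeries (Fin 2) ℚ) • pderiv ℚ 0 + (X 1 : MvPowerSeries (Fin 2) ℚ) • pderiv ℚ 1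

lemma coeff_X_mul_pderiv {σ R : Type*} [CommSemiring R] (i : σ) (d : σ →₀ ℕ)
    (V : MvPowerSeries σ R) : coeff d (X i * pderiv R i V) = d i * coeff d V := by
  classical
  rw [X, coeff_monomial_mul]
  split_ifs with h
  · rw [one_mul, coeff_pderiv, tsub_add_cancel_of_le h, mul_comm]
    rw [Finsupp.single_le_iff] at h
    simp [← Nat.cast_succ, Nat.sub_add_cancel h]
  · rw [Finsupp.single_le_iff] at h
    simp [show d i = 0 by lia]

lemma euler_apply (V : MvPowerSeries (Fin 2) ℚ) :
    euler V = (1 + X 0) * pderiv ℚ 0 V + X 1 * pderiv ℚ 1 V := rfl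

lemma coeffXE_euler (i k : ℕ) (V : MvPowerSeries (Fin 2) ℚ) :
    coeffXE i k (euler V) = (i + 1) * coeffXE (i + 1) k V + (i + k) * coeffXE i k V := by
  rw [euler_apply, add_mul, one_mul, map_add, map_add, coeffXE_pderiv_zero, coeffXE,
    coeff_X_mul_pderiv, coeff_X_mul_pderiv, add_assoc, ← add_mul]
  simp

lemma choose_add_succ_mul (i t : ℕ) :
    ((i + 1 + t).choose t : ℚ) * (i + 1) = (i + t).choose t * (i + 1 + t) := by
  have := Nat.choose_mul_succ_eq (i + t) t
  rw [show i + t + 1 - t = i + 1 by lia, show i + t + 1 = i + 1 + t by lia] at this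
  exact_mod_cast this.symm

lemma euler_shiftS (c : ℚ) (V : MvPowerSeries (Fin 2) ℚ) :
    euler (shiftS c V) = shiftS c (euler V) :=
  ext_coeffXE fun i k => by
    simp only [coeffXE_shiftS, coeffXE_euler, Finset.mul_sum]
    rw [← Finset.sum_add_distrib]
    refine Finset.sum_congr rfl fun t ht => ?_
    push_cast [Nat.lt_succ_iff.1 (Finset.mem_range.1 ht)]
    rw [add_right_comm i t 1]
    linear_combination c ^ t * coeffXE (i + 1 + t) (k - t) V * choose_add_succ_mul i t

lemma euler_fexp {W : MvPowerSeries (Fin 2) ℚ} (hW : constantCoeff W = 0) :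
    euler (fexp W) = euler W * fexp W := by
  simp only [euler_apply, pderiv_fexp _ hW]
  ring

lemma euler_one_add_X : euler (1 + X 0) = 1 + X 0 := by
  rw [euler_apply]
  simp

lemma coeffXE_shiftS_mul {i k : ℕ} {G : MvPowerSeries (Fin 2) ℚ} (c : ℚ)
    (F : MvPowerSeries (Fin 2) ℚ) (lower_order : ∀ i', ∀ k' < k, coeffXE i' k' G = 0)
    (lower_index : ∀ i' < i, coeffXE i' k G = 0) :
    coeffXE i k (shiftS c G * F) = coeffXE i k G * constantCoeff F := by
  have coeff_shiftS (i' k' : ℕ) (hk : k' ≤ k) : coeffXE i' k' (shiftS c G) = coeffXE i' k' G := by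
    rw [coeffXE_shiftS, Finset.sum_range_succ', Finset.sum_eq_zero]
    · simp
    · intro t ht
      rw [lower_order _ _ (by rw [Finset.mem_range] at ht; lia), mul_zero]
  rw [coeffXE, coeff_mul, Finset.sum_eq_single (Finsupp.single 0 i + Finsupp.single 1 k, 0)]
  · rw [coeff_shiftS i k le_rfl, coeff_zero_eq_constantCoeff_apply]
  · rintro ⟨p, q⟩ hpq hne
    rw [Finset.HasAntidiagonal.mem_antidiagonal] at hpq
    have h0 : p 0 + q 0 = i := by simpa using DFunLike.congr_fun hpq 0
    have h1 : p 1 + q 1 = k := by simpa using DFunLike.congr_fun hpq 1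
    have coeff_p : coeff p (shiftS c G) = coeffXE (p 0) (p 1) G := by
      rw [← coeff_shiftS _ _ (by lia), coeffXE, single_add_single_eq]
    rw [coeff_p]
    rcases (show p 1 ≤ k by lia).lt_or_eq with hp1 | hp1
    · rw [lower_order _ _ hp1, zero_mul]
    rcases (show p 0 ≤ i by lia).lt_or_eq with hp0 | hp0
    · rw [hp1, lower_index _ hp0, zero_mul]
    have p_eq : p = Finsupp.single 0 i + Finsupp.single 1 k := by
      rw [← single_add_single_eq p, hp0, hp1]
    exact absurd (Prod.ext p_eq (by simpa [p_eq] using hpq)) hne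
  · simp

-- The coefficient of `shiftS c G` at the least `X ^ i E ^ k` (ordered by `k`, then `i`) occurring
-- in `G` does not depend on `c`.
theorem eq_zero_of_sum_shiftS_mul_eq_zero {ι : Type*} {s : Finset ι} {c : ι → ℚ}
    {F : ι → MvPowerSeries (Fin 2) ℚ} {G : MvPowerSeries (Fin 2) ℚ}
    (hF : ∑ i ∈ s, constantCoeff (F i) ≠ 0) (h : ∑ i ∈ s, shiftS (c i) G * F i = 0) : G = 0 := by
  refine ext_coeffXE fun i k => ?_
  rw [map_zero]
  induction k using Nat.strong_induction_on generalizing i with | _ k lower_order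
  induction i using Nat.strong_induction_on with | _ i lower_index
  have coeff_eq := congrArg (coeffXE i k) h
  simp only [map_sum, map_zero,
    coeffXE_shiftS_mul _ _ (fun i' k' hk => lower_order k' hk i') lower_index] at coeff_eq
  rw [← Finset.mul_sum] at coeff_eq
  exact (mul_eq_zero.1 coeff_eq).resolve_right hF

end Euler

section Homogeneous

variable {V : MvPowerSeries (Fin 2) ℚ} {c : ℚ}

lemma coeffXE_succ_of_euler_eq_C (hV : euler V = C c) (i k : ℕ) :
    (i + 1) * coeffXE (i + 1) k V
      = -(i + k) * coeffXE i k V + if i = 0 ∧ k = 0 then c else 0 := by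
  have := congrArg (coeffXE i k) hV
  rw [coeffXE_euler, coeffXE_C] at this
  linear_combination this

lemma coeffXE_succ_zero_of_euler_eq_C (hV : euler V = C c) (i : ℕ) :
    coeffXE (i + 1) 0 V = (-1) ^ i * c / (i + 1) := by
  induction i with
  | zero => simpa using coeffXE_succ_of_euler_eq_C hV 0 0
  | succ i ih =>
    have recursion := coeffXE_succ_of_euler_eq_C hV (i + 1) 0
    rw [ih, if_neg (by simp)] at recursion
    rw [eq_div_iff (by positivity), mul_comm, recursion]
    push_cast
    field_simp
    ring

lemma coeffXE_add_one_of_euler_eq_C (hV : euler V = C c) (i k : ℕ) :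
    coeffXE i (k + 1) V = (-1) ^ i * (i + k).choose k * coeffXE 0 (k + 1) V := by
  induction i with
  | zero => simp
  | succ i ih =>
    have recursion := coeffXE_succ_of_euler_eq_C hV i (k + 1)
    rw [ih, if_neg (by simp)] at recursion
    refine mul_left_cancel₀ (by positivity : (i + 1 : ℚ) ≠ 0) ?_
    rw [recursion]
    push_cast
    linear_combination (-1) ^ i * coeffXE 0 (k + 1) V * choose_add_succ_mul i k

lemma coeff_inv_one_add_X_pow_succ (i k : ℕ) :
    PowerSeries.coeff i ((1 + PowerSeries.X : PowerSeries ℚ)⁻¹ ^ (k + 1))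
      = (-1) ^ i * (i + k).choose k := by
  have inv_eq : (1 + PowerSeries.X : PowerSeries ℚ)⁻¹
      = PowerSeries.rescale (-1) (PowerSeries.mk 1) := by
    have := congrArg (PowerSeries.rescale (-1 : ℚ)) (PowerSeries.mk_one_mul_one_sub_eq_one ℚ)
    rw [eq_comm, PowerSeries.eq_inv_iff_mul_eq_one (by simp)]
    simpa using this
  rw [inv_eq, ← map_pow, PowerSeries.mk_one_pow_eq_mk_choose_add, PowerSeries.coeff_rescale,
    PowerSeries.coeff_mk, add_comm]

theorem coeffXE_of_euler_eq_C (hV : euler V = C c) {k : ℕ} (hk : k ≠ 0) (i : ℕ) :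
    coeffXE i k V
      = coeffXE 0 k V * PowerSeries.coeff i ((1 + PowerSeries.X : PowerSeries ℚ)⁻¹ ^ k) := by
  obtain ⟨k, rfl⟩ := Nat.exists_eq_succ_of_ne_zero hk
  rw [Nat.succ_eq_add_one, coeffXE_add_one_of_euler_eq_C hV, coeff_inv_one_add_X_pow_succ,
    mul_comm]

theorem euler_eq_C_of_sum_fexp_shiftS_eq {ι : Type*} {s : Finset ι} {j : ℕ} {b : ι → Fin j → ℚ}
    {K : ℚ} (hs : s.Nonempty) (hj : j ≠ 0) (hV0 : constantCoeff V = 0)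
    (h : ∑ a ∈ s, fexp (∑ i, shiftS (b a i) V) = K • (1 + X 0)) : euler V = C (1 / j : ℚ) := by
  let W (a : ι) := ∑ i, shiftS (b a i) V
  let G := euler V - C (1 / j : ℚ)
  have constantCoeff_W (a : ι) : constantCoeff (W a) = 0 := by
    simp [W, constantCoeff_shiftS, hV0]
  have euler_W (a : ι) : euler (W a) = ∑ i, shiftS (b a i) G + 1 := by
    have shift_split (q : ℚ) : shiftS q (euler V) = shiftS q G + C (1 / j : ℚ) := by
      rw [← shiftS_C q (1 / j), ← shiftS_add, sub_add_cancel]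
    have sum_const : ∑ _i : Fin j, C (1 / j : ℚ) = (1 : MvPowerSeries (Fin 2) ℚ) := by
      rw [← map_sum, Fin.sum_const, nsmul_eq_mul, mul_one_div_cancel (by positivity), map_one]
    simp only [W, map_sum, euler_shiftS, shift_split, Finset.sum_add_distrib, sum_const]
  have euler_sum : ∑ a ∈ s, (∑ i, shiftS (b a i) G + 1) * fexp (W a) = ∑ a ∈ s, fexp (W a) := by
    have sum_eq : ∑ a ∈ s, fexp (W a) = K • (1 + X 0) := h
    have := congrArg euler sum_eq
    rw [map_sum, Derivation.map_smul, euler_one_add_X, ← sum_eq] at this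
    simpa only [euler_fexp (constantCoeff_W _), euler_W] using this
  suffices G = 0 from sub_eq_zero.1 this
  refine eq_zero_of_sum_shiftS_mul_eq_zero (s := s ×ˢ Finset.univ) (c := fun p => b p.1 p.2)
    (F := fun p => fexp (W p.1)) ?_ ?_
  · simp [hs.ne_empty, hj]
  · rw [Finset.sum_product]
    simp only [← Finset.sum_mul]
    simpa [add_mul, Finset.sum_add_distrib] using euler_sum

end Homogeneous

section Chains

/-- The weakly increasing sequences `α₁ ≤ ⋯ ≤ α_j` of natural numbers less than `b`. They are
`ℕ`-valued so that a sequence can be extended by its last term without changing types. -/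
def chains (j b : ℕ) : Finset (Fin j → ℕ) :=
  {α ∈ Fintype.piFinset fun _ => Finset.range b | ∀ i k, i ≤ k → α i ≤ α k}

lemma mem_chains {j b : ℕ} {α : Fin j → ℕ} :
    α ∈ chains j b ↔ (∀ i, α i < b) ∧ ∀ i k, i ≤ k → α i ≤ α k := by
  simp [chains]

lemma chains_zero_left (b : ℕ) : chains 0 b = {Fin.elim0} := by
  ext α
  simp [mem_chains, Subsingleton.elim α Fin.elim0]

lemma chains_succ_zero (j : ℕ) : chains (j + 1) 0 = ∅ := by
  ext α
  simp [mem_chains]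

lemma snoc_mem_chains_iff {j b c : ℕ} {α : Fin j → ℕ} :
    (Fin.snoc α b : Fin (j + 1) → ℕ) ∈ chains (j + 1) c ↔ α ∈ chains j (b + 1) ∧ b < c := by
  simp only [mem_chains, Fin.forall_fin_succ', Fin.snoc_castSucc, Fin.snoc_last, Fin.le_last,
    Fin.castSucc_le_castSucc_iff, Fin.last_le_iff, Fin.castSucc_ne_last]
  grind

lemma sum_chains_succ_succ {A : Type*} [AddCommMonoid A] (j b : ℕ) (f : (Fin (j + 1) → ℕ) → A) :
    ∑ α ∈ chains (j + 1) (b + 1), f α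
      = ∑ α ∈ chains (j + 1) b, f α + ∑ α ∈ chains j (b + 1), f (Fin.snoc α b) := by
  have decompose : chains (j + 1) (b + 1)
      = chains (j + 1) b ∪ (chains j (b + 1)).image (fun α => Fin.snoc α b) := by
    ext α
    induction α using Fin.snocCases with | _ α c
    simp only [Finset.mem_union, Finset.mem_image, snoc_mem_chains_iff, Fin.snoc_inj]
    grind
  rw [decompose, Finset.sum_union, Finset.sum_image]
  · exact fun α _ β _ h => (Fin.snoc_inj.1 h).1
  · rw [Finset.disjoint_right]
    simp [snoc_mem_chains_iff]

lemma card_chains (j b : ℕ) : (chains j b).card = b.multichoose j := by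
  fun_induction Nat.multichoose b j with
  | case1 b => simp [chains_zero_left]
  | case2 j => simp [chains_succ_zero]
  | case3 b j ih_smaller ih_shorter =>
    have := sum_chains_succ_succ j b fun _ => 1
    simp only [Finset.sum_const, nsmul_eq_mul, mul_one, ih_smaller, ih_shorter] at this
    exact_mod_cast this

lemma chains_succ_nonempty (j a : ℕ) : (chains j (a + 1)).Nonempty :=
  ⟨0, mem_chains.2 (by simp)⟩

lemma expect_chains_succ_succ (j a : ℕ) (f : (Fin (j + 1) → ℕ) → ℚ) :
    (j + a + 1) * 𝔼 α ∈ chains (j + 1) (a + 1), f α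
      = a * 𝔼 α ∈ chains (j + 1) a, f α + (j + 1) * 𝔼 α ∈ chains j (a + 1), f (Fin.snoc α a) := by
  have card_ne_zero : ((chains j (a + 1)).card : ℚ) ≠ 0 :=
    Nat.cast_ne_zero.2 (chains_succ_nonempty j a).card_ne_zero
  have card_ratio : ((chains (j + 1) a).card : ℚ) * (j + 1) = (chains j (a + 1)).card * a := by
    have := Nat.choose_succ_right_eq (a + j) j
    simp only [card_chains, Nat.multichoose_eq]
    rw [Nat.add_sub_cancel] at this
    rw [show a + (j + 1) - 1 = a + j by lia, show a + 1 + j - 1 = a + j by lia]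
    exact_mod_cast this
  have sum_split := sum_chains_succ_succ j a f
  have card_split := sum_chains_succ_succ j a fun _ => (1 : ℚ)
  simp only [Finset.sum_const, nsmul_eq_mul, mul_one] at card_split
  simp only [← Finset.card_mul_expect, card_split] at sum_split
  refine mul_left_cancel₀ card_ne_zero ?_
  linear_combination (j + 1 : ℚ) * sum_split + (𝔼 α ∈ chains (j + 1) a, f α
    - 𝔼 α ∈ chains (j + 1) (a + 1), f α) * card_ratio

/-- `HasMean F T` says that the average of `F` over the sequences `α₁ ≤ ⋯ ≤ α_j ≤ a` is `T j a`. -/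
abbrev HasMean (F : ∀ j, (Fin j → ℕ) → ℚ) (T : ℚ → ℚ → ℚ) : Prop :=
  ∀ j a : ℕ, 𝔼 α ∈ chains j (a + 1), F j α = T j a

theorem HasMean.of_recursion {F : ∀ j, (Fin j → ℕ) → ℚ} {T : ℚ → ℚ → ℚ}
    (zero : ∀ a : ℕ, F 0 Fin.elim0 = T 0 a)
    (succ : ∀ j a : ℕ, 𝔼 α ∈ chains j (a + 1), F j α = T j a →
      a * T (j + 1) (a - 1) + (j + 1) * 𝔼 α ∈ chains j (a + 1), F (j + 1) (Fin.snoc α a)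
        = (j + a + 1) * T (j + 1) a) :
    HasMean F T := by
  intro j
  induction j with
  | zero => intro a; simp [chains_zero_left, zero a]
  | succ j mean_shorter =>
    have mean_of_smaller (a : ℕ)
        (smaller : a * 𝔼 α ∈ chains (j + 1) a, F (j + 1) α = a * T (j + 1) (a - 1)) :
        𝔼 α ∈ chains (j + 1) (a + 1), F (j + 1) α = T (j + 1) a := by
      refine mul_left_cancel₀ (by positivity : (j + a + 1 : ℚ) ≠ 0) ?_
      rw [expect_chains_succ_succ, smaller, succ j a (mean_shorter a)]
    intro a
    push_cast
    induction a with
    | zero => exact mean_of_smaller 0 (by simp)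
    | succ a mean_smaller => exact mean_of_smaller (a + 1) (by simp [mean_smaller])

end Chains

section Moments

variable (M N : ℚ)

/-- The shift `a M - (i + 1/2) N` of a term of value `a` in position `i`, counted from `0`. -/
def stepShift (i a : ℚ) : ℚ := a * M - (i + 1 / 2) * N

/-- The sum of the `k`-th powers of the shifts of the terms of `α`. -/
def powerSum (k : ℕ) {j : ℕ} (α : Fin j → ℕ) : ℚ :=
  ∑ i : Fin j, stepShift M N (i : ℕ) (α i) ^ k

lemma powerSum_zero {j : ℕ} (α : Fin j → ℕ) : powerSum M N 0 α = j := by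
  simp [powerSum]

@[simp]
lemma powerSum_elim0 (k : ℕ) : powerSum M N k Fin.elim0 = 0 := by
  simp [powerSum]

lemma powerSum_snoc (k : ℕ) {j : ℕ} (α : Fin j → ℕ) (a : ℕ) :
    powerSum M N k (Fin.snoc α a : Fin (j + 1) → ℕ)
      = powerSum M N k α + stepShift M N j a ^ k := by
  simp [powerSum, Fin.sum_univ_castSucc]

/-- The slope defect `a M - j N`, which is twice the mean shift of a random sequence and vanishes
in the case `j = M`, `a = N` of the difference equation. -/
def drift (j a : ℚ) : ℚ := a * M - j * N

lemma drift_self : drift M N M N = 0 := by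
  rw [drift]
  ring

/-- The variance of the first power sum, multiplied by `12 / j`. -/
def scaledVariance (j a : ℚ) : ℚ := a * M ^ 2 * (a + j + 1)

/-- The mean of the second power sum, multiplied by `12 / j` and diminished by `4 drift ^ 2`. -/
def squareExcess (a : ℚ) : ℚ := 2 * a * M * (M + N) - N ^ 2

local notation "p₁" => powerSum M N 1
local notation "p₂" => powerSum M N 2
local notation "p₃" => powerSum M N 3
local notation "p₄" => powerSum M N 4
local notation "d" => drift M N
local notation "S" => scaledVariance M
local notation "R" => squareExcess M N

theorem hasMean_powerSum_one : HasMean (fun _ α => p₁ α) fun j a =>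
    j * d j a / 2 := by
  refine .of_recursion (fun a => by simp) fun j a ih => ?_
  simp only [powerSum_snoc, Finset.expect_add_distrib,
    Finset.expect_const (chains_succ_nonempty j a), ih, stepShift, drift]
  ring

theorem hasMean_powerSum_two : HasMean (fun _ α => p₂ α) fun j a =>
    j * (4 * d j a ^ 2 + R a) / 12 := by
  refine .of_recursion (fun a => by simp) fun j a ih => ?_
  simp only [powerSum_snoc, Finset.expect_add_distrib,
    Finset.expect_const (chains_succ_nonempty j a), ih, stepShift, drift, squareExcess]
  ring

theorem hasMean_powerSum_three : HasMean (fun _ α => p₃ α) fun j a =>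
    j * d j a * (2 * d j a ^ 2 + R a) / 8 := by
  refine .of_recursion (fun a => by simp) fun j a ih => ?_
  simp only [powerSum_snoc, Finset.expect_add_distrib,
    Finset.expect_const (chains_succ_nonempty j a), ih, stepShift, drift, squareExcess]
  ring

theorem hasMean_powerSum_four : HasMean (fun _ α => p₄ α) fun j a =>
    j * (48 * d j a ^ 4 + 4 * (9 * R a - N ^ 2) * d j a ^ 2 + 7 * N ^ 4
      + 4 * a * M * (M + N) * (2 * a * M * (M + 2 * N) + 2 * j * N * (2 * M + N)
        - 2 * M ^ 2 - 2 * M * N - 7 * N ^ 2)) / 240 := by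
  refine .of_recursion (fun a => by simp) fun j a ih => ?_
  simp only [powerSum_snoc, Finset.expect_add_distrib,
    Finset.expect_const (chains_succ_nonempty j a), ih, stepShift, drift, squareExcess]
  ring

theorem hasMean_powerSum_one_sq : HasMean (fun _ α => p₁ α ^ 2) fun j a =>
    j * (3 * j * d j a ^ 2 + S j a) / 12 := by
  refine .of_recursion (fun a => by simp) fun j a ih => ?_
  let c := stepShift M N j a
  have expand (α : Fin j → ℕ) : p₁ (Fin.snoc α a : Fin (j + 1) → ℕ) ^ 2
      = p₁ α ^ 2 + 2 * c * p₁ α + c ^ 2 := by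
    simp only [powerSum_snoc]
    ring
  simp only [expand, Finset.expect_add_distrib, Finset.expect_const (chains_succ_nonempty j a),
    ← Finset.mul_expect, ih, hasMean_powerSum_one M N j a, c, stepShift, drift, scaledVariance]
  ring

theorem hasMean_powerSum_one_mul_two : HasMean (fun _ α => p₁ α * p₂ α) fun j a =>
    j * d j a * (4 * j * d j a ^ 2 + 2 * S j a + j * R a) / 24 := by
  refine .of_recursion (fun a => by simp) fun j a ih => ?_
  let c := stepShift M N j a
  have expand (α : Fin j → ℕ) :
      p₁ (Fin.snoc α a : Fin (j + 1) → ℕ)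
        * p₂ (Fin.snoc α a : Fin (j + 1) → ℕ)
      = p₁ α * p₂ α + c * p₂ α + c ^ 2 * p₁ α + c ^ 3 := by
    simp only [powerSum_snoc]
    ring
  simp only [expand, Finset.expect_add_distrib, Finset.expect_const (chains_succ_nonempty j a),
    ← Finset.mul_expect, ih, hasMean_powerSum_one M N j a, hasMean_powerSum_two M N j a, c,
    stepShift, drift, scaledVariance, squareExcess]
  ring

theorem hasMean_powerSum_one_cube : HasMean (fun _ α => p₁ α ^ 3) fun j a =>
    j ^ 2 * d j a * (j * d j a ^ 2 + S j a) / 8 := by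
  refine .of_recursion (fun a => by simp) fun j a ih => ?_
  let c := stepShift M N j a
  have expand (α : Fin j → ℕ) : p₁ (Fin.snoc α a : Fin (j + 1) → ℕ) ^ 3
      = p₁ α ^ 3 + 3 * c * p₁ α ^ 2 + 3 * c ^ 2 * p₁ α + c ^ 3 := by
    simp only [powerSum_snoc]
    ring
  simp only [expand, Finset.expect_add_distrib, Finset.expect_const (chains_succ_nonempty j a),
    ← Finset.mul_expect, ih, hasMean_powerSum_one M N j a, hasMean_powerSum_one_sq M N j a, c,
    stepShift, drift, scaledVariance]
  ring

theorem hasMean_powerSum_one_mul_three : HasMean (fun _ α => p₁ α * p₃ α) fun j a =>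
    j * (15 * j * d j a ^ 2 * (2 * d j a ^ 2 + R a) + S j a * (18 * d j a ^ 2
      + 6 * (M + N) * (a * M + j * N) - 4 * M ^ 2 - 6 * M * N - 9 * N ^ 2)) / 240 := by
  refine .of_recursion (fun a => by simp) fun j a ih => ?_
  let c := stepShift M N j a
  have expand (α : Fin j → ℕ) :
      p₁ (Fin.snoc α a : Fin (j + 1) → ℕ)
        * p₃ (Fin.snoc α a : Fin (j + 1) → ℕ)
      = p₁ α * p₃ α + c * p₃ α + c ^ 3 * p₁ α + c ^ 4 := by
    simp only [powerSum_snoc]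
    ring
  simp only [expand, Finset.expect_add_distrib, Finset.expect_const (chains_succ_nonempty j a),
    ← Finset.mul_expect, ih, hasMean_powerSum_one M N j a, hasMean_powerSum_three M N j a, c,
    stepShift, drift, scaledVariance, squareExcess]
  ring

theorem hasMean_powerSum_two_sq : HasMean (fun _ α => p₂ α ^ 2) fun j a =>
    j * (5 * j * (4 * d j a ^ 2 + R a) ^ 2 + 4 * S j a * (16 * d j a ^ 2
      + 2 * (M + N) * (a * M + j * N) - 3 * M ^ 2 - 2 * M * N - 3 * N ^ 2)) / 720 := by
  refine .of_recursion (fun a => by simp) fun j a ih => ?_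
  let c := stepShift M N j a
  have expand (α : Fin j → ℕ) : p₂ (Fin.snoc α a : Fin (j + 1) → ℕ) ^ 2
      = p₂ α ^ 2 + 2 * c ^ 2 * p₂ α + c ^ 4 := by
    simp only [powerSum_snoc]
    ring
  simp only [expand, Finset.expect_add_distrib, Finset.expect_const (chains_succ_nonempty j a),
    ← Finset.mul_expect, ih, hasMean_powerSum_two M N j a, c, stepShift, drift, scaledVariance,
    squareExcess]
  ring

theorem hasMean_powerSum_one_sq_mul_two : HasMean (fun _ α => p₁ α ^ 2 * p₂ α) fun j a =>
    j * (15 * j ^ 2 * d j a ^ 2 * (4 * d j a ^ 2 + R a) + S j a * (5 * j * (16 * d j a ^ 2 + R a)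
      + 4 * M * (a ^ 2 * M + 2 * a * j * (M + N) + j ^ 2 * N
        - 2 * a * N - 2 * j * M - M - N))) / 720 := by
  refine .of_recursion (fun a => by simp) fun j a ih => ?_
  let c := stepShift M N j a
  have expand (α : Fin j → ℕ) :
      p₁ (Fin.snoc α a : Fin (j + 1) → ℕ) ^ 2
        * p₂ (Fin.snoc α a : Fin (j + 1) → ℕ)
      = p₁ α ^ 2 * p₂ α + 2 * c * (p₁ α * p₂ α) + c ^ 2 * p₁ α ^ 2 + c ^ 2 * p₂ α
        + 2 * c ^ 3 * p₁ α + c ^ 4 := by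
    simp only [powerSum_snoc]
    ring
  simp only [expand, Finset.expect_add_distrib, Finset.expect_const (chains_succ_nonempty j a),
    ← Finset.mul_expect, ih, hasMean_powerSum_one M N j a, hasMean_powerSum_two M N j a,
    hasMean_powerSum_one_sq M N j a, hasMean_powerSum_one_mul_two M N j a, c, stepShift, drift,
    scaledVariance, squareExcess]
  ring

theorem hasMean_powerSum_one_pow_four : HasMean (fun _ α => p₁ α ^ 4) fun j a =>
    j * (15 * j ^ 3 * d j a ^ 4 + 30 * j ^ 2 * S j a * d j a ^ 2 + 5 * j * S j a ^ 2
      - 2 * S j a * M ^ 2 * (a ^ 2 + j ^ 2 + a * j + a + j)) / 240 := by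
  refine .of_recursion (fun a => by simp) fun j a ih => ?_
  let c := stepShift M N j a
  have expand (α : Fin j → ℕ) : p₁ (Fin.snoc α a : Fin (j + 1) → ℕ) ^ 4
      = p₁ α ^ 4 + 4 * c * p₁ α ^ 3 + 6 * c ^ 2 * p₁ α ^ 2 + 4 * c ^ 3 * p₁ α + c ^ 4 := by
    simp only [powerSum_snoc]
    ring
  simp only [expand, Finset.expect_add_distrib, Finset.expect_const (chains_succ_nonempty j a),
    ← Finset.mul_expect, ih, hasMean_powerSum_one M N j a, hasMean_powerSum_one_sq M N j a,
    hasMean_powerSum_one_cube M N j a, c, stepShift, drift, scaledVariance]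
  ring

end Moments

section ShiftedSum

lemma sum_filter_monotone_eq_sum_chains {A : Type*} [AddCommMonoid A] (m n : ℕ)
    (f : (Fin m → ℕ) → A) :
    ∑ α ∈ Finset.univ.filter
        (fun α : Fin m → Fin (n + 1) => ∀ i j : Fin m, i ≤ j → α i ≤ α j), f (fun i => α i)
      = ∑ α ∈ chains m (n + 1), f α := by
  refine Finset.sum_bij' (fun α _ i => (α i : ℕ))
    (fun α hα i => ⟨α i, (mem_chains.1 hα).1 i⟩) ?_ ?_ ?_ ?_ ?_ <;>
    simp +contextual [mem_chains, Fin.is_le]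

/-- The exponent of the difference equation: `V` summed over the shifts of the terms of `α`. -/
noncomputable def shiftedSum (M N : ℚ) (V : MvPowerSeries (Fin 2) ℚ) {j : ℕ} (α : Fin j → ℕ) :
    MvPowerSeries (Fin 2) ℚ :=
  ∑ i : Fin j, shiftS (stepShift M N (i : ℕ) (α i)) V

lemma constantCoeff_shiftedSum (M N : ℚ) {V : MvPowerSeries (Fin 2) ℚ}
    (hV0 : constantCoeff V = 0) {j : ℕ} (α : Fin j → ℕ) :
    constantCoeff (shiftedSum M N V α) = 0 := by
  simp [shiftedSum, constantCoeff_shiftS, hV0]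

lemma coeffXE_zero_shiftedSum (M N : ℚ) (V : MvPowerSeries (Fin 2) ℚ) {j : ℕ} (α : Fin j → ℕ)
    (k : ℕ) : coeffXE 0 k (shiftedSum M N V α)
      = ∑ t ∈ Finset.range (k + 1), powerSum M N t α * coeffXE t (k - t) V := by
  simp only [shiftedSum, map_sum, coeffXE_shiftS, powerSum, Finset.sum_mul]
  rw [Finset.sum_comm]
  simp

variable (M N : ℚ) {V : MvPowerSeries (Fin 2) ℚ} {c : ℚ} {j : ℕ} (α : Fin j → ℕ)

lemma coeffXE_zero_succ_shiftedSum (hV : euler V = C c) (k : ℕ) :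
    coeffXE 0 (k + 1) (shiftedSum M N V α)
      = (-1) ^ k * c / (k + 1) * powerSum M N (k + 1) α
        + ∑ t ∈ Finset.range (k + 1),
            (-1) ^ t * k.choose t * powerSum M N t α * coeffXE 0 (k + 1 - t) V := by
  rw [coeffXE_zero_shiftedSum, Finset.sum_range_succ, Nat.sub_self,
    coeffXE_succ_zero_of_euler_eq_C hV, mul_comm, add_comm]
  refine congrArg _ (Finset.sum_congr rfl fun t ht => ?_)
  have t_le : t ≤ k := Nat.lt_succ_iff.1 (Finset.mem_range.1 ht)
  rw [Nat.succ_sub t_le, Nat.succ_eq_add_one, coeffXE_add_one_of_euler_eq_C hV,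
    Nat.add_sub_cancel' t_le, Nat.choose_symm t_le]
  ring

lemma coeffXE_zero_one_shiftedSum (hV : euler V = C c) :
    coeffXE 0 1 (shiftedSum M N V α) = j * coeffXE 0 1 V + powerSum M N 1 α * c := by
  rw [coeffXE_zero_succ_shiftedSum M N α hV 0]
  simp only [Finset.sum_range_succ, Finset.sum_range_zero, powerSum_zero, Nat.choose]
  ring

lemma coeffXE_zero_two_shiftedSum (hV : euler V = C c) :
    coeffXE 0 2 (shiftedSum M N V α)
      = j * coeffXE 0 2 V - powerSum M N 1 α * coeffXE 0 1 V - powerSum M N 2 α * (c / 2) := by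
  rw [coeffXE_zero_succ_shiftedSum M N α hV 1]
  simp only [Finset.sum_range_succ, Finset.sum_range_zero, powerSum_zero, Nat.choose]
  ring

lemma coeffXE_zero_three_shiftedSum (hV : euler V = C c) :
    coeffXE 0 3 (shiftedSum M N V α)
      = j * coeffXE 0 3 V - powerSum M N 1 α * (2 * coeffXE 0 2 V)
        + powerSum M N 2 α * coeffXE 0 1 V + powerSum M N 3 α * (c / 3) := by
  rw [coeffXE_zero_succ_shiftedSum M N α hV 2]
  simp only [Finset.sum_range_succ, Finset.sum_range_zero, powerSum_zero, Nat.choose]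
  ring

lemma coeffXE_zero_four_shiftedSum (hV : euler V = C c) :
    coeffXE 0 4 (shiftedSum M N V α)
      = j * coeffXE 0 4 V - powerSum M N 1 α * (3 * coeffXE 0 3 V)
        + powerSum M N 2 α * (3 * coeffXE 0 2 V) - powerSum M N 3 α * coeffXE 0 1 V
        - powerSum M N 4 α * (c / 4) := by
  rw [coeffXE_zero_succ_shiftedSum M N α hV 3]
  simp only [Finset.sum_range_succ, Finset.sum_range_zero, powerSum_zero, Nat.choose]
  ring

end ShiftedSum

section DifferenceEquation

variable {m n : ℕ} {V : MvPowerSeries (Fin 2) ℚ}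

lemma sum_fexp_shiftedSum_of_diffEq (hVeq : diffEq m n V) :
    ∑ α ∈ chains m (n + 1), fexp (shiftedSum m n V α)
      = ((m + n).choose m : ℚ) • (1 + X 0 : MvPowerSeries (Fin 2) ℚ) := by
  rw [Nat.cast_smul_eq_nsmul, nsmul_eq_mul, ← sum_filter_monotone_eq_sum_chains]
  exact hVeq

theorem euler_eq_C_of_diffEq (hm : m ≠ 0) (hV0 : constantCoeff V = 0) (hVeq : diffEq m n V) :
    euler V = C (1 / m : ℚ) :=
  euler_eq_C_of_sum_fexp_shiftS_eq (chains_succ_nonempty m n) hm hV0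
    (sum_fexp_shiftedSum_of_diffEq hVeq)

lemma expect_coeffXE_zero_fexp_of_diffEq (hVeq : diffEq m n V) {k : ℕ} (hk : k ≠ 0) :
    𝔼 α ∈ chains m (n + 1), coeffXE 0 k (fexp (shiftedSum m n V α)) = 0 := by
  have coeff_rhs : coeffXE 0 k (1 + X 0) = 0 := by
    simp [coeffXE, coeff_one, coeff_X, hk, Finsupp.ext_iff]
  rw [Finset.expect_eq_sum_div_card, ← map_sum, sum_fexp_shiftedSum_of_diffEq hVeq, map_smul,
    coeff_rhs, smul_zero, zero_div]

variable (hm : m ≠ 0) (hV0 : constantCoeff V = 0) (hVeq : diffEq m n V)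
include hm hV0 hVeq

theorem coeffXE_zero_one_of_diffEq : coeffXE 0 1 V = 0 := by
  have euler_V := euler_eq_C_of_diffEq hm hV0 hVeq
  have expand (α : Fin m → ℕ) : coeffXE 0 1 (fexp (shiftedSum m n V α))
      = m * coeffXE 0 1 V + 1 / m * powerSum m n 1 α := by
    rw [coeffXE_zero_one_fexp (constantCoeff_shiftedSum _ _ hV0 _),
      coeffXE_zero_one_shiftedSum _ _ _ euler_V]
    ring
  have mean_eq := expect_coeffXE_zero_fexp_of_diffEq hVeq one_ne_zero
  simp only [expand, Finset.expect_add_distrib, ← Finset.mul_expect,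
    Finset.expect_const (chains_succ_nonempty m n), hasMean_powerSum_one m n m n,
    drift_self, mul_zero, zero_div, add_zero] at mean_eq
  exact (mul_eq_zero.1 mean_eq).resolve_left (mod_cast hm)

theorem coeffXE_zero_two_of_diffEq :
    coeffXE 0 2 V = ((m : ℚ) - 1) * n * (m + n) / (24 * m) := by
  have euler_V := euler_eq_C_of_diffEq hm hV0 hVeq
  have coeff_one := coeffXE_zero_one_of_diffEq hm hV0 hVeq
  have expand (α : Fin m → ℕ) : coeffXE 0 2 (fexp (shiftedSum m n V α))
      = m * coeffXE 0 2 V - 1 / (2 * m) * powerSum m n 2 α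
        + 1 / (2 * m ^ 2) * powerSum m n 1 α ^ 2 := by
    rw [coeffXE_zero_two_fexp (constantCoeff_shiftedSum _ _ hV0 _),
      coeffXE_zero_one_shiftedSum _ _ _ euler_V, coeffXE_zero_two_shiftedSum _ _ _ euler_V,
      coeff_one]
    ring
  have mean_eq := expect_coeffXE_zero_fexp_of_diffEq hVeq two_ne_zero
  simp only [expand, Finset.expect_add_distrib, Finset.expect_sub_distrib, ← Finset.mul_expect,
    Finset.expect_const (chains_succ_nonempty m n), hasMean_powerSum_two m n m n,
    hasMean_powerSum_one_sq m n m n, drift_self, scaledVariance, squareExcess] at mean_eq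
  linear_combination (norm := (field_simp; ring)) mean_eq / m

theorem coeffXE_zero_three_of_diffEq : coeffXE 0 3 V = 0 := by
  have euler_V := euler_eq_C_of_diffEq hm hV0 hVeq
  have coeff_one := coeffXE_zero_one_of_diffEq hm hV0 hVeq
  have expand (α : Fin m → ℕ) : coeffXE 0 3 (fexp (shiftedSum m n V α))
      = m * coeffXE 0 3 V - coeffXE 0 2 V * powerSum m n 1 α + 1 / (3 * m) * powerSum m n 3 α
        - 1 / (2 * m ^ 2) * (powerSum m n 1 α * powerSum m n 2 α)
        + 1 / (6 * m ^ 3) * powerSum m n 1 α ^ 3 := by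
    rw [coeffXE_zero_three_fexp (constantCoeff_shiftedSum _ _ hV0 _),
      coeffXE_zero_one_shiftedSum _ _ _ euler_V, coeffXE_zero_two_shiftedSum _ _ _ euler_V,
      coeffXE_zero_three_shiftedSum _ _ _ euler_V, coeff_one]
    field_simp
    ring
  have mean_eq := expect_coeffXE_zero_fexp_of_diffEq hVeq three_ne_zero
  simp only [expand, Finset.expect_add_distrib, Finset.expect_sub_distrib, ← Finset.mul_expect,
    Finset.expect_const (chains_succ_nonempty m n), hasMean_powerSum_one m n m n,
    hasMean_powerSum_three m n m n, hasMean_powerSum_one_mul_two m n m n,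
    hasMean_powerSum_one_cube m n m n, drift_self, mul_zero, zero_mul, zero_div, sub_zero,
    add_zero] at mean_eq
  exact (mul_eq_zero.1 mean_eq).resolve_left (mod_cast hm)

theorem coeffXE_zero_four_of_diffEq :
    coeffXE 0 4 V = -((4 * (m : ℚ) ^ 2 * (n : ℚ) ^ 2 * ((m : ℚ) + n) ^ 2
      + (m : ℚ) * n * ((m : ℚ) + n) * (3 * (m : ℚ) ^ 2 - 7 * m * n - 7 * (n : ℚ) ^ 2)
      - (n : ℚ) * ((m : ℚ) + n) * (4 * (m : ℚ) ^ 2 - 3 * m * n - 3 * (n : ℚ) ^ 2)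
      + (m : ℚ) * n * ((m : ℚ) + n)) / (960 * m)) := by
  have euler_V := euler_eq_C_of_diffEq hm hV0 hVeq
  have coeff_one := coeffXE_zero_one_of_diffEq hm hV0 hVeq
  have coeff_three := coeffXE_zero_three_of_diffEq hm hV0 hVeq
  have expand (α : Fin m → ℕ) : coeffXE 0 4 (fexp (shiftedSum m n V α))
      = m * coeffXE 0 4 V + m ^ 2 * coeffXE 0 2 V ^ 2 / 2
        + 5 * coeffXE 0 2 V / 2 * powerSum m n 2 α
        - 3 * coeffXE 0 2 V / (2 * m) * powerSum m n 1 α ^ 2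
        - 1 / (4 * m) * powerSum m n 4 α
        + 1 / (3 * m ^ 2) * (powerSum m n 1 α * powerSum m n 3 α)
        + 1 / (8 * m ^ 2) * powerSum m n 2 α ^ 2
        - 1 / (4 * m ^ 3) * (powerSum m n 1 α ^ 2 * powerSum m n 2 α)
        + 1 / (24 * m ^ 4) * powerSum m n 1 α ^ 4 := by
    rw [coeffXE_zero_four_fexp (constantCoeff_shiftedSum _ _ hV0 _),
      coeffXE_zero_one_shiftedSum _ _ _ euler_V, coeffXE_zero_two_shiftedSum _ _ _ euler_V,
      coeffXE_zero_three_shiftedSum _ _ _ euler_V, coeffXE_zero_four_shiftedSum _ _ _ euler_V,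
      coeff_one, coeff_three]
    field_simp
    ring
  have mean_eq := expect_coeffXE_zero_fexp_of_diffEq hVeq four_ne_zero
  simp only [expand, Finset.expect_add_distrib, Finset.expect_sub_distrib, ← Finset.mul_expect,
    Finset.expect_const (chains_succ_nonempty m n), hasMean_powerSum_two m n m n,
    hasMean_powerSum_one_sq m n m n, hasMean_powerSum_four m n m n,
    hasMean_powerSum_one_mul_three m n m n, hasMean_powerSum_two_sq m n m n,
    hasMean_powerSum_one_sq_mul_two m n m n, hasMean_powerSum_one_pow_four m n m n, drift_self,
    coeffXE_zero_two_of_diffEq hm hV0 hVeq, scaledVariance, squareExcess] at mean_eq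
  linear_combination (norm := (field_simp; ring)) mean_eq / m

end DifferenceEquation

theorem gap_coefficients_P1_P2_general (m n : ℕ) (hm : 0 < m)
    (V : MvPowerSeries (Fin 2) ℚ)
    (hV0 : MvPowerSeries.constantCoeff V = 0) (hVeq : diffEq m n V) :
    (∀ i : ℕ, MvPowerSeries.coeff (Finsupp.single 0 i + Finsupp.single 1 2) V
        = (((m : ℚ) - 1) * n * ((m : ℚ) + n) / (24 * m)) *
            PowerSeries.coeff i (((1 + PowerSeries.X : PowerSeries ℚ))⁻¹ ^ 2)) ∧
    (∀ i : ℕ, MvPowerSeries.coeff (Finsupp.single 0 i + Finsupp.single 1 4) V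
        = (-((4 * (m : ℚ) ^ 2 * (n : ℚ) ^ 2 * ((m : ℚ) + n) ^ 2
              + (m : ℚ) * n * ((m : ℚ) + n) * (3 * (m : ℚ) ^ 2 - 7 * m * n - 7 * (n : ℚ) ^ 2)
              - (n : ℚ) * ((m : ℚ) + n) * (4 * (m : ℚ) ^ 2 - 3 * m * n - 3 * (n : ℚ) ^ 2)
              + (m : ℚ) * n * ((m : ℚ) + n)) / (960 * m))) *
            PowerSeries.coeff i (((1 + PowerSeries.X : PowerSeries ℚ))⁻¹ ^ 4)) := by
  have euler_V := euler_eq_C_of_diffEq hm.ne' hV0 hVeq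
  refine ⟨fun i => ?_, fun i => ?_⟩
  · rw [← coeffXE_zero_two_of_diffEq hm.ne' hV0 hVeq]
    exact coeffXE_of_euler_eq_C euler_V two_ne_zero i
  · rw [← coeffXE_zero_four_of_diffEq hm.ne' hV0 hVeq]
    exact coeffXE_of_euler_eq_C euler_V four_ne_zero i

/-- The first two gap coefficients:  for the unique zero-constant-term solution `V` of
the difference equation, the coefficient of `E^2` equals `P_1(m,n)·(1+X)^{-2}` with
`P_1(m,n) = (m-1)·n·h/(24m)`, and the coefficient of `E^4` equals `P_2(m,n)·(1+X)^{-4}`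
with `P_2(m,n) = -(4m²n²h² + mnh(3m²-7mn-7n²) - nh(4m²-3mn-3n²) + mnh)/(960m)`,
where `h = m+n`. -/
theorem gap_coefficients_P1_P2 (m n : ℕ) (hm : 0 < m) (hn : 0 < n) (hmn : Nat.Coprime m n)
    (V : MvPowerSeries (Fin 2) ℚ)
    (hV0 : MvPowerSeries.constantCoeff V = 0) (hVeq : diffEq m n V) :
    (∀ i : ℕ, MvPowerSeries.coeff (Finsupp.single 0 i + Finsupp.single 1 2) V
        = (((m : ℚ) - 1) * n * ((m : ℚ) + n) / (24 * m)) *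
            PowerSeries.coeff i (((1 + PowerSeries.X : PowerSeries ℚ))⁻¹ ^ 2)) ∧
    (∀ i : ℕ, MvPowerSeries.coeff (Finsupp.single 0 i + Finsupp.single 1 4) V
        = (-((4 * (m : ℚ) ^ 2 * (n : ℚ) ^ 2 * ((m : ℚ) + n) ^ 2
              + (m : ℚ) * n * ((m : ℚ) + n) * (3 * (m : ℚ) ^ 2 - 7 * m * n - 7 * (n : ℚ) ^ 2)
              - (n : ℚ) * ((m : ℚ) + n) * (4 * (m : ℚ) ^ 2 - 3 * m * n - 3 * (n : ℚ) ^ 2)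
              + (m : ℚ) * n * ((m : ℚ) + n)) / (960 * m))) *
            PowerSeries.coeff i (((1 + PowerSeries.X : PowerSeries ℚ))⁻¹ ^ 4)) :=
  gap_coefficients_P1_P2_general m n hm V hV0 hVeq
end
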